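/- Fix m ≥ 1. The sequence (v_{2^k}(m))_{k∈ℕ} is nondecreasing, bounded above by v*(m), and converges to v*(m); equivalently, sup over k ∈ ℕ of v_{2^k}(m) equals v*(m). That is, the lower bounds obtained by restricting the adversary to item sizes that are integer multiples of 1/2^k converge to the optimal worst-case expected performance of randomized online algorithms for online bin stretching. -/

import Mathlib

/-!
The inequalities `v_{2^k} ≤ v_{2^{k+1}} ≤ v*` hold because the adversary's set of instances grows;
all suprema are finite since the total size of an instance is at most `m`.

For the convergence, put `V = sup_k v_{2^k}` and choose algorithms `A_k` with worst case at most
`v_{2^k} + 1/(k+1)` on the grid `1/2^k`. For every item list the distributions `A_k L` live in a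
compact simplex, so along a fixed nonprincipal ultrafilter they converge to a distribution `A L`.
The expected payoff on a fixed instance is a polynomial in finitely many of these probabilities, and
an instance with dyadic sizes belongs to the grid `1/2^k` for all large `k`; hence `A` has expected
payoff at most `V` on every dyadic instance (`exists_limit_algorithm`).

Given `ε > 0`, an arbitrary instance is played by rounding its `i`-th item down to a positive
dyadic number with error at most `ε / 2 / 2^i` and following `A` on the rounded list. The rounded
list is still an instance, and the errors sum to at most `ε`, so every bin load changes by at most
`ε` however many items there are (`expPayoff_comp_le`). Therefore `v* ≤ V + ε`.
-/

open scoped BigOperators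

namespace BinStretch

def Fits (m : ℕ) (I : List ℝ) : Prop :=
  ∃ σ : Fin I.length → Fin m,
    ∀ b : Fin m, ∑ i ∈ Finset.univ.filter fun i => σ i = b, I.get i ≤ 1

def IsInstance (m : ℕ) (I : List ℝ) : Prop :=
  (∀ a ∈ I, 0 < a ∧ a ≤ 1) ∧ Fits m I

noncomputable def payoff (m : ℕ) (I : List ℝ) (D : Fin I.length → Fin m) : ℝ :=
  ⨆ b : Fin m, ∑ i ∈ Finset.univ.filter fun i => D i = b, I.get i

noncomputable def prob {m : ℕ} (A : List ℝ → PMF (Fin m)) (I : List ℝ)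
    (D : Fin I.length → Fin m) : ℝ :=
  ∏ i : Fin I.length, ((A (I.take (i.1 + 1))) (D i)).toReal

noncomputable def expPayoff (m : ℕ) (A : List ℝ → PMF (Fin m)) (I : List ℝ) : ℝ :=
  ∑ D : Fin I.length → Fin m, prob A I D * payoff m I D

def detRun {m : ℕ} (A : List ℝ → Fin m) (I : List ℝ) : Fin I.length → Fin m :=
  fun i => A (I.take (i.1 + 1))

end BinStretch

namespace BinStretch

/-- Instances all of whose item sizes are integer multiples of `1/g`. -/
def InstanceG (m g : ℕ) (I : List ℝ) : Prop :=
  IsInstance m I ∧ ∀ a ∈ I, ∃ x : ℕ, a = (x : ℝ) / g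

/-- Optimal worst-case expected payoff of randomized algorithms against
adversaries restricted to item sizes that are multiples of `1/g`. -/
noncomputable def vg (m g : ℕ) : ℝ :=
  ⨅ A : List ℝ → PMF (Fin m),
    ⨆ I : {I : List ℝ // InstanceG m g I}, expPayoff m A I.1

/-- Optimal worst-case expected payoff of randomized algorithms. -/
noncomputable def vstar (m : ℕ) : ℝ :=
  ⨅ A : List ℝ → PMF (Fin m),
    ⨆ I : {I : List ℝ // IsInstance m I}, expPayoff m A I.1

end BinStretch

namespace BinStretch

open Filter Topology

/-! ### Bounds on the expected payoff -/

lemma isInstance_nil (m : ℕ) : IsInstance m [] :=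
  ⟨by simp, fun i => i.elim0, fun b => by simp⟩

lemma instanceG_nil (m g : ℕ) : InstanceG m g [] :=
  ⟨isInstance_nil m, by simp⟩

lemma prob_nonneg {m : ℕ} (A : List ℝ → PMF (Fin m)) (I : List ℝ) (D : Fin I.length → Fin m) :
    0 ≤ prob A I D :=
  Finset.prod_nonneg fun _ _ => ENNReal.toReal_nonneg

lemma sum_toReal_pmf {m : ℕ} (p : PMF (Fin m)) : ∑ b, (p b).toReal = 1 := by
  rw [← ENNReal.toReal_sum fun b _ => p.apply_ne_top b, ← tsum_fintype (L := .unconditional _),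
    p.tsum_coe, ENNReal.toReal_one]

lemma sum_prob {m : ℕ} (A : List ℝ → PMF (Fin m)) (I : List ℝ) : ∑ D, prob A I D = 1 := by
  have h := Finset.prod_univ_sum (fun _ : Fin I.length => (Finset.univ : Finset (Fin m)))
    (fun i b => ((A (I.take (i.1 + 1))) b).toReal)
  rw [Fintype.piFinset_univ] at h
  unfold prob
  rw [← h]
  exact Finset.prod_eq_one fun i _ => sum_toReal_pmf _

lemma payoff_nonneg {m : ℕ} {I : List ℝ} (hI : IsInstance m I) (D : Fin I.length → Fin m) :
    0 ≤ payoff m I D :=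
  Real.iSup_nonneg fun _ => Finset.sum_nonneg fun i _ => (hI.1 _ (I.get_mem i)).1.le

lemma expPayoff_nonneg {m : ℕ} (A : List ℝ → PMF (Fin m)) {I : List ℝ} (hI : IsInstance m I) :
    0 ≤ expPayoff m A I :=
  Finset.sum_nonneg fun D _ => mul_nonneg (prob_nonneg A I D) (payoff_nonneg hI D)

/-- The total size of an instance, and hence every payoff, is at most `m`. -/
lemma payoff_le {m : ℕ} {I : List ℝ} (hI : IsInstance m I) (D : Fin I.length → Fin m) :
    payoff m I D ≤ m := by
  obtain ⟨hpos, σ, hσ⟩ := hI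
  refine Real.iSup_le (fun b => ?_) (Nat.cast_nonneg m)
  calc ∑ i ∈ Finset.univ.filter (fun i => D i = b), I.get i
      ≤ ∑ i, I.get i := Finset.sum_le_sum_of_subset_of_nonneg (Finset.filter_subset _ _)
        fun i _ _ => (hpos _ (I.get_mem i)).1.le
    _ = ∑ c, ∑ i ∈ Finset.univ.filter (fun i => σ i = c), I.get i :=
        (Finset.sum_fiberwise _ _ _).symm
    _ ≤ ∑ _c : Fin m, (1 : ℝ) := Finset.sum_le_sum fun c _ => hσ c
    _ = m := by simp

lemma expPayoff_le {m : ℕ} (A : List ℝ → PMF (Fin m)) {I : List ℝ} (hI : IsInstance m I) :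
    expPayoff m A I ≤ m := by
  calc expPayoff m A I ≤ ∑ D, prob A I D * m :=
        Finset.sum_le_sum fun D _ => mul_le_mul_of_nonneg_left (payoff_le hI D) (prob_nonneg A I D)
    _ = m := by rw [← Finset.sum_mul, sum_prob, one_mul]

/-! ### Monotonicity of the values -/

/-- Worst-case expected payoff of `A` over the instances satisfying `P`. -/
noncomputable def worst (m : ℕ) (P : List ℝ → Prop) (A : List ℝ → PMF (Fin m)) : ℝ :=
  ⨆ I : {I : List ℝ // P I}, expPayoff m A I.1

lemma bddAbove_expPayoff {m : ℕ} {P : List ℝ → Prop} (hP : ∀ I, P I → IsInstance m I)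
    (A : List ℝ → PMF (Fin m)) :
    BddAbove (Set.range fun I : {I : List ℝ // P I} => expPayoff m A I.1) :=
  ⟨m, by rintro _ ⟨I, rfl⟩; exact expPayoff_le A (hP _ I.2)⟩

lemma bddBelow_worst {m : ℕ} {P : List ℝ → Prop} (hP : ∀ I, P I → IsInstance m I) :
    BddBelow (Set.range (worst m P)) :=
  ⟨0, by rintro _ ⟨A, rfl⟩; exact Real.iSup_nonneg fun I => expPayoff_nonneg A (hP _ I.2)⟩

lemma iInf_worst_mono {m : ℕ} {P Q : List ℝ → Prop} (hQ : ∀ I, Q I → IsInstance m I)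
    (hPQ : ∀ I, P I → Q I) (hnil : P []) : ⨅ A, worst m P A ≤ ⨅ A, worst m Q A := by
  refine ciInf_mono (bddBelow_worst fun I h => hQ I (hPQ I h)) fun A => ?_
  have : Nonempty {I : List ℝ // P I} := ⟨⟨[], hnil⟩⟩
  exact ciSup_le fun I => le_ciSup (bddAbove_expPayoff hQ A) ⟨I.1, hPQ _ I.2⟩

lemma dyadic_refine {a : ℝ} {k l : ℕ} (hkl : k ≤ l) (h : ∃ x : ℕ, a = (x : ℝ) / (2 ^ k : ℕ)) :
    ∃ x : ℕ, a = (x : ℝ) / (2 ^ l : ℕ) := by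
  obtain ⟨x, rfl⟩ := h
  obtain ⟨d, rfl⟩ := Nat.exists_eq_add_of_le hkl
  refine ⟨x * 2 ^ d, ?_⟩
  push_cast
  rw [pow_add]
  field_simp

lemma instanceG_mono {m k l : ℕ} (hkl : k ≤ l) {I : List ℝ} (h : InstanceG m (2 ^ k) I) :
    InstanceG m (2 ^ l) I :=
  ⟨h.1, fun a ha => dyadic_refine hkl (h.2 a ha)⟩

lemma vg_mono (m : ℕ) : Monotone fun k : ℕ => vg m (2 ^ k) := fun _ _ hkl =>
  iInf_worst_mono (fun _ h => h.1) (fun _ h => instanceG_mono hkl h) (instanceG_nil _ _)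

lemma vg_le_vstar (m g : ℕ) : vg m g ≤ vstar m :=
  iInf_worst_mono (fun _ h => h) (fun _ h => h.1) (instanceG_nil _ _)

/-! ### A limit of near-optimal algorithms -/

/-- Pointwise compactness of the space of behavioral algorithms, along an ultrafilter. -/
lemma exists_pmf_limit {m : ℕ} (U : Ultrafilter ℕ) (p : ℕ → PMF (Fin m)) :
    ∃ q : PMF (Fin m), ∀ b, Tendsto (fun k => (p k b).toReal) U (𝓝 (q b).toReal) := by
  have hmem : ∀ k, (fun b => (p k b).toReal) ∈ stdSimplex ℝ (Fin m) := fun k =>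
    ⟨fun _ => ENNReal.toReal_nonneg, sum_toReal_pmf _⟩
  obtain ⟨q, ⟨hq0, hq1⟩, hq⟩ := (isCompact_stdSimplex ℝ (Fin m)).ultrafilter_le_nhds
    (U.map fun k b => (p k b).toReal)
    (le_principal_iff.2 (Filter.mem_map.2 (Filter.univ_mem' hmem)))
  refine ⟨PMF.ofFintype (fun b => ENNReal.ofReal (q b)) ?_, fun b => ?_⟩
  · rw [← ENNReal.ofReal_sum_of_nonneg fun b _ => hq0 b, hq1, ENNReal.ofReal_one]
  · rw [PMF.ofFintype_apply, ENNReal.toReal_ofReal (hq0 b)]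
    exact (tendsto_pi_nhds.1 (show Tendsto (fun k b => (p k b).toReal) U (𝓝 q) from hq)) b

/-- One algorithm guarantees `sup_k v_{2^k}` simultaneously against all dyadic instances. -/
lemma exists_limit_algorithm {m : ℕ} (hm : 1 ≤ m) :
    ∃ A : List ℝ → PMF (Fin m), ∀ k I, InstanceG m (2 ^ k) I →
      expPayoff m A I ≤ ⨆ k : ℕ, vg m (2 ^ k) := by
  have : Nonempty (List ℝ → PMF (Fin m)) := ⟨fun _ => PMF.pure ⟨0, hm⟩⟩
  have hbdd : BddAbove (Set.range fun k : ℕ => vg m (2 ^ k)) :=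
    ⟨vstar m, by rintro _ ⟨k, rfl⟩; exact vg_le_vstar m _⟩
  have hnear : ∀ k : ℕ, ∃ A : List ℝ → PMF (Fin m),
      worst m (InstanceG m (2 ^ k)) A < vg m (2 ^ k) + 1 / ((k : ℝ) + 1) := fun k =>
    exists_lt_of_ciInf_lt (lt_add_of_pos_right _ Nat.one_div_pos_of_nat)
  choose B hB using hnear
  choose A hA using fun L => exists_pmf_limit (hyperfilter ℕ) fun k => B k L
  have hU : ((hyperfilter ℕ : Ultrafilter ℕ) : Filter ℕ) ≤ atTop :=
    Nat.hyperfilter_le_atTop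
  refine ⟨A, fun k I hI => ?_⟩
  have h1 : Tendsto (fun l => expPayoff m (B l) I) (hyperfilter ℕ) (𝓝 (expPayoff m A I)) :=
    tendsto_finsetSum _ fun D _ =>
      (tendsto_finsetProd _ fun i _ => hA _ (D i)).mul_const _
  have h2 : Tendsto (fun l : ℕ => (⨆ k : ℕ, vg m (2 ^ k)) + 1 / ((l : ℝ) + 1)) (hyperfilter ℕ)
      (𝓝 ((⨆ k : ℕ, vg m (2 ^ k)) + 0)) :=
    (tendsto_const_nhds.add tendsto_one_div_add_atTop_nhds_zero_nat).mono_left hU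
  rw [add_zero] at h2
  refine le_of_tendsto_of_tendsto h1 h2 (hU ?_)
  filter_upwards [eventually_ge_atTop k] with l hl
  calc expPayoff m (B l) I ≤ worst m (InstanceG m (2 ^ l)) (B l) :=
        le_ciSup (bddAbove_expPayoff (fun _ h => h.1) (B l)) ⟨I, instanceG_mono hl hI⟩
    _ ≤ vg m (2 ^ l) + 1 / ((l : ℝ) + 1) := (hB l).le
    _ ≤ _ := by gcongr; exact le_ciSup hbdd l

/-! ### Rounding down to dyadic sizes -/

lemma exists_dyadic_below {a δ : ℝ} (ha : 0 < a) (hδ : 0 < δ) :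
    ∃ y : ℝ, 0 < y ∧ y ≤ a ∧ a ≤ y + δ ∧ ∃ k x : ℕ, y = (x : ℝ) / (2 ^ k : ℕ) := by
  obtain ⟨k, hk⟩ := exists_pow_lt_of_lt_one (lt_min ha hδ) (by norm_num : (1 / 2 : ℝ) < 1)
  obtain ⟨hka, hkδ⟩ := lt_min_iff.1 hk
  have h2 : (0 : ℝ) < 2 ^ k := by positivity
  rw [div_pow, one_pow] at hka hkδ
  rw [div_lt_iff₀ h2] at hka hkδ
  have hf := Nat.floor_le (a := a * 2 ^ k) (by positivity)
  have hf' := Nat.lt_floor_add_one (a * 2 ^ k)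
  have hx : 1 ≤ ⌊a * 2 ^ k⌋₊ := Nat.le_floor (by simpa using hka.le)
  have hx' : (0 : ℝ) < ⌊a * 2 ^ k⌋₊ := by exact_mod_cast hx
  refine ⟨(⌊a * 2 ^ k⌋₊ : ℝ) / 2 ^ k, by positivity, (div_le_iff₀ h2).2 hf, ?_,
    k, ⌊a * 2 ^ k⌋₊, by push_cast; rfl⟩
  rw [div_add' _ _ _ h2.ne', le_div_iff₀ h2]
  linarith

/-- Following `A` on the item lists rounded by `r` (which may depend on the position of the item)
costs at most `ε` more than `A` on the rounded instance, if the total rounding error is bounded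
by `ε`. -/
lemma expPayoff_comp_le {m : ℕ} (hm : 1 ≤ m) (A : List ℝ → PMF (Fin m)) (r : ℕ → ℝ → ℝ)
    (I : List ℝ) {ε : ℝ} (hr : ∀ i : Fin I.length, r i I[i] ≤ I[i])
    (hε : ∑ i : Fin I.length, (I[i] - r i I[i]) ≤ ε) :
    expPayoff m (fun L => A (L.mapIdx r)) I ≤ expPayoff m A (I.mapIdx r) + ε := by
  have : Nonempty (Fin m) := ⟨⟨0, hm⟩⟩
  -- Decision sequences for the two lists are identified along the equality of lengths.
  let e : Fin I.length ≃ Fin (I.mapIdx r).length := finCongr List.length_mapIdx.symm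
  have hget : ∀ i, (I.mapIdx r).get (e i) = r i I[i] := fun i => by
    simp [e]
  have hprob : ∀ D : Fin I.length → Fin m,
      prob (fun L => A (L.mapIdx r)) I D = prob A (I.mapIdx r) (D ∘ e.symm) := fun D => by
    refine Fintype.prod_equiv e _ _ fun i => ?_
    have : ((e i : Fin _) : ℕ) = i := rfl
    rw [this, Function.comp_apply, Equiv.symm_apply_apply]
    simp only
    rw [show (I.take (i.1 + 1)).mapIdx r = (I.mapIdx r).take (i.1 + 1) from by
      apply List.ext_getElem <;> simp]
  have hpay : ∀ D : Fin I.length → Fin m,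
      payoff m I D ≤ payoff m (I.mapIdx r) (D ∘ e.symm) + ε := fun D => by
    refine ciSup_le fun b => ?_
    have hb := le_ciSup (Set.finite_range fun b : Fin m =>
      ∑ j ∈ Finset.univ.filter (fun j => (D ∘ e.symm) j = b), (I.mapIdx r).get j).bddAbove b
    have hsum : ∑ j ∈ Finset.univ.filter (fun j => (D ∘ e.symm) j = b), (I.mapIdx r).get j
        = ∑ i ∈ Finset.univ.filter (fun i => D i = b), r i I[i] := by
      rw [Finset.sum_filter, Finset.sum_filter]
      refine (Fintype.sum_equiv e _ _ fun i => ?_).symm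
      rw [Function.comp_apply, Equiv.symm_apply_apply, hget]
    have hdiff : ∑ i ∈ Finset.univ.filter (fun i => D i = b), (I[i] - r i I[i]) ≤ ε :=
      (Finset.sum_le_sum_of_subset_of_nonneg (Finset.filter_subset _ _)
        fun i _ _ => sub_nonneg.2 (hr i)).trans hε
    rw [Finset.sum_sub_distrib, ← hsum] at hdiff
    change ∑ i ∈ Finset.univ.filter (fun i => D i = b), I[i] ≤ _
    unfold payoff
    linarith
  have hE : expPayoff m A (I.mapIdx r) = ∑ D : Fin I.length → Fin m,
      prob A (I.mapIdx r) (D ∘ e.symm) * payoff m (I.mapIdx r) (D ∘ e.symm) :=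
    (Fintype.sum_equiv (Equiv.arrowCongr e (Equiv.refl _)) _ _ fun D => rfl).symm
  calc expPayoff m (fun L => A (L.mapIdx r)) I
      ≤ ∑ D, prob (fun L => A (L.mapIdx r)) I D * (payoff m (I.mapIdx r) (D ∘ e.symm) + ε) :=
        Finset.sum_le_sum fun D _ => mul_le_mul_of_nonneg_left (hpay D) (prob_nonneg _ I D)
    _ = expPayoff m A (I.mapIdx r) + ε := by
        simp_rw [mul_add]
        rw [Finset.sum_add_distrib, ← Finset.sum_mul, sum_prob, one_mul, hE]
        simp_rw [hprob]

/-- Rounding all items of an instance down to positive dyadic numbers yields an instance on some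
common dyadic grid. -/
lemma exists_instanceG_mapIdx {m : ℕ} (r : ℕ → ℝ → ℝ) {I : List ℝ} (hI : IsInstance m I)
    (hpos : ∀ i a, 0 < a → 0 < r i a) (hle : ∀ i a, 0 < a → r i a ≤ a)
    (hdy : ∀ i a, 0 < a → ∃ k x : ℕ, r i a = (x : ℝ) / (2 ^ k : ℕ)) :
    ∃ K, InstanceG m (2 ^ K) (I.mapIdx r) := by
  obtain ⟨hI1, σ, hσ⟩ := hI
  have h0 : ∀ i : Fin I.length, 0 < I[i] := fun i => (hI1 _ (I.get_mem i)).1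
  choose k hk using fun i : Fin I.length => hdy i I[i] (h0 i)
  refine ⟨Finset.univ.sup k, ⟨fun a ha => ?_, ?_⟩, fun a ha => ?_⟩
  · obtain ⟨i, hi, rfl⟩ := List.mem_mapIdx.1 ha
    have := hI1 _ (I.getElem_mem hi)
    exact ⟨hpos _ _ this.1, (hle _ _ this.1).trans this.2⟩
  · let e : Fin I.length ≃ Fin (I.mapIdx r).length := finCongr List.length_mapIdx.symm
    refine ⟨σ ∘ e.symm, fun b => le_trans ?_ (hσ b)⟩
    rw [Finset.sum_filter, Finset.sum_filter, ← Equiv.sum_comp e]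
    refine Finset.sum_le_sum fun i _ => ?_
    rw [Function.comp_apply, Equiv.symm_apply_apply]
    split_ifs
    · simpa [e] using hle i I[i] (h0 i)
    · exact le_rfl
  · obtain ⟨i, hi, rfl⟩ := List.mem_mapIdx.1 ha
    exact dyadic_refine (Finset.le_sup (Finset.mem_univ ⟨i, hi⟩)) (hk ⟨i, hi⟩)

lemma vstar_le_iSup_vg {m : ℕ} (hm : 1 ≤ m) : vstar m ≤ ⨆ k : ℕ, vg m (2 ^ k) := by
  refine le_of_forall_pos_le_add fun ε hε => ?_
  obtain ⟨A, hA⟩ := exists_limit_algorithm hm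
  have hround : ∀ (i : ℕ) (a : ℝ), ∃ y : ℝ, 0 < a → 0 < y ∧ y ≤ a ∧ a ≤ y + ε / 2 / 2 ^ i ∧
      ∃ k x : ℕ, y = (x : ℝ) / (2 ^ k : ℕ) := fun i a => by
    by_cases ha : 0 < a
    · obtain ⟨y, hy⟩ := exists_dyadic_below ha (show 0 < ε / 2 / 2 ^ i by positivity)
      exact ⟨y, fun _ => hy⟩
    · exact ⟨0, fun h => absurd h ha⟩
  choose r hr using hround
  have : Nonempty {I : List ℝ // IsInstance m I} := ⟨⟨[], isInstance_nil m⟩⟩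
  refine (ciInf_le (bddBelow_worst (P := IsInstance m) fun _ h => h)
    fun L => A (L.mapIdx r)).trans (ciSup_le ?_)
  rintro ⟨I, hI⟩
  have h0 : ∀ i : Fin I.length, 0 < I[i] := fun i => (hI.1 _ (I.get_mem i)).1
  obtain ⟨K, hK⟩ := exists_instanceG_mapIdx r hI (fun i a ha => (hr i a ha).1)
    (fun i a ha => (hr i a ha).2.1) (fun i a ha => (hr i a ha).2.2.2)
  have herr : ∑ i : Fin I.length, (I[i] - r i I[i]) ≤ ε :=
    calc ∑ i : Fin I.length, (I[i] - r i I[i])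
        ≤ ∑ i : Fin I.length, ε / 2 / 2 ^ (i : ℕ) := Finset.sum_le_sum fun i _ => by
          linarith [(hr i I[i] (h0 i)).2.2.1]
      _ = ∑ i ∈ Finset.range I.length, ε / 2 / 2 ^ i :=
          Fin.sum_univ_eq_sum_range (fun i => ε / 2 / 2 ^ i) _
      _ ≤ ∑' i : ℕ, ε / 2 / 2 ^ i :=
          (summable_geometric_two' ε).sum_le_tsum _ fun i _ => by positivity
      _ = ε := tsum_geometric_two' ε
  have h := expPayoff_comp_le hm A r I (fun i => (hr i I[i] (h0 i)).2.1) herr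
  have := hA K _ hK
  linarith

end BinStretch

theorem dyadic_lower_bounds_converge (m : ℕ) (hm : 1 ≤ m) :
    Monotone (fun k : ℕ => BinStretch.vg m (2 ^ k)) ∧
    (∀ k : ℕ, BinStretch.vg m (2 ^ k) ≤ BinStretch.vstar m) ∧
    Filter.Tendsto (fun k : ℕ => BinStretch.vg m (2 ^ k)) Filter.atTop
      (nhds (BinStretch.vstar m)) ∧
    (⨆ k : ℕ, BinStretch.vg m (2 ^ k)) = BinStretch.vstar m := by
  have hbdd : BddAbove (Set.range fun k : ℕ => BinStretch.vg m (2 ^ k)) :=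
    ⟨BinStretch.vstar m, by rintro _ ⟨k, rfl⟩; exact BinStretch.vg_le_vstar m _⟩
  have hsup : (⨆ k : ℕ, BinStretch.vg m (2 ^ k)) = BinStretch.vstar m :=
    le_antisymm (ciSup_le fun k => BinStretch.vg_le_vstar m _) (BinStretch.vstar_le_iSup_vg hm)
  refine ⟨BinStretch.vg_mono m, fun k => BinStretch.vg_le_vstar m _, ?_, hsup⟩
  rw [← hsup]
  exact tendsto_atTop_ciSup (BinStretch.vg_mono m) hbdd
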